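/- For every integer k ≥ 2, with d = 4k there exists a d-quasi-copula Q : [0,1]^d → [0,1] such that the Q-volume of the box B = [2/3, 1]^d equals (1/3)(1 − C(d, d/2 − 1)); explicitly, one may take Q with vertex values depending only on the number ‖I‖₁ of coordinates of the vertex equal to 1, namely Q(x_I) = 1 if ‖I‖₁ = d, Q(x_I) = 2/3 if d/2 + 1 ≤ ‖I‖₁ ≤ d − 1, Q(x_I) = 1/3 if ‖I‖₁ ∈ {d/2 − 1, d/2}, and Q(x_I) = 0 otherwise. -/

import Mathlib

/-!
The vertex values prescribed on `{2/3, 1}^d`, `d = 4k`, are `m(‖I‖₁) / 3` for an integer level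
`m ∈ {0, 1, 2, 3}` which is nondecreasing and increases by at most one at each step. The
quasi-copula is the smallest nondecreasing function, 1-Lipschitz for the `ℓ¹` distance, that
dominates both `0` and these values, namely
`Q(u) = max_I max(0, m(‖I‖₁)/3 - Σ_l (x_I,l - u_l)⁺)`.

Monotonicity and the Lipschitz condition hold term by term. The upper bound `Q(u) ≤ min_l u_l`
(`quasi_le`), which gives `Q = 0` on the lower faces and half of the marginal condition, holds
because `m(‖I‖₁)/3` never exceeds a coordinate of `x_I`. The other half of the marginal condition
comes from the term of the vertex `(1, …, 1)`, which gives `Q(u) ≥ 1 - Σ_l (1 - u_l)`. That `Q` takes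
the prescribed values (`quasi_vertex`) is the step condition on `m`, since
`Σ_l (x_I,l - x_J,l)⁺ ≥ (‖I‖₁ - ‖J‖₁)/3`.

For the volume, `m(j)` is `3` minus the number of the thresholds `2k - 1`, `2k + 1`, `4k` that exceed
`j`, so the signed sum over the vertices reduces to three truncated alternating sums of binomial
coefficients, each a single binomial coefficient, and Pascal's rule combines them.
-/

namespace QC

/-- A point lies in the unit cube `[0,1]^d`. -/
def InCube {d : ℕ} (u : Fin d → ℝ) : Prop := ∀ i, u i ∈ Set.Icc (0:ℝ) 1

/-- A `d`-quasi-copula: boundary conditions, monotonicity in each variable,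
and the `ℓ¹`-Lipschitz condition, on the unit cube. -/
structure IsQuasiCopula (d : ℕ) (Q : (Fin d → ℝ) → ℝ) : Prop where
  mem : ∀ u, InCube u → Q u ∈ Set.Icc (0:ℝ) 1
  bc0 : ∀ u, InCube u → (∃ i, u i = 0) → Q u = 0
  bc1 : ∀ (i : Fin d), ∀ t ∈ Set.Icc (0:ℝ) 1,
      Q (fun j => if j = i then t else 1) = t
  mono : ∀ (i : Fin d) (u v : Fin d → ℝ), InCube u → InCube v →
      (∀ j, j ≠ i → u j = v j) → u i ≤ v i → Q u ≤ Q v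
  lip : ∀ u v, InCube u → InCube v → |Q u - Q v| ≤ ∑ i, |u i - v i|

/-- `‖I‖₁` for a multi-index `I ∈ {0,1}^d`. -/
def normOne {d : ℕ} (I : Fin d → Bool) : ℕ :=
  (Finset.univ.filter fun k => I k = true).card

/-- The vertex `x_I` of the box `Π [a_i, b_i]`. -/
def vertex {d : ℕ} (a b : Fin d → ℝ) (I : Fin d → Bool) : Fin d → ℝ :=
  fun k => if I k then b k else a k

/-- The `Q`-volume of the box `Π [a_i, b_i]`. -/
def boxVolume {d : ℕ} (Q : (Fin d → ℝ) → ℝ) (a b : Fin d → ℝ) : ℝ :=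
  ∑ I : Fin d → Bool, (-1 : ℝ) ^ (d - normOne I) * Q (vertex a b I)

/-- `Π [a_i, b_i]` is a `d`-box inside `[0,1]^d` with `a_i < b_i`. -/
def IsBox {d : ℕ} (a b : Fin d → ℝ) : Prop :=
  ∀ i, 0 ≤ a i ∧ a i < b i ∧ b i ≤ 1

/-- `G_d(x) = Σ x_i - d + 1`. -/
def Gd {d : ℕ} (x : Fin d → ℝ) : ℝ := (∑ i, x i) - d + 1

/-- `H_d(x) = min { x_1, …, x_d }`. -/
noncomputable def Hd {d : ℕ} (x : Fin d → ℝ) : ℝ := ⨅ i, x i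

/-- `I ∼_ℓ J` for multi-indices in `{0,1}^d`: `J - I = e^(ℓ)`. -/
def Adj2 {d : ℕ} (I J : Fin d → Bool) (ℓ : Fin d) : Prop :=
  I ℓ = false ∧ J ℓ = true ∧ ∀ k, k ≠ ℓ → I k = J k

/-- The grid point `x_I ∈ Π {a_i, 1}` for `I ∈ {0,1}^d`. -/
def xI2 {d : ℕ} (a : Fin d → ℝ) (I : Fin d → Bool) : Fin d → ℝ :=
  fun k => if I k then 1 else a k

/-- The grid point `x_I ∈ Π {a_i, b_i, 1}` for `I ∈ {0,1,2}^d`. -/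
def xI3 {d : ℕ} (a b : Fin d → ℝ) (I : Fin d → Fin 3) : Fin d → ℝ :=
  fun k => if I k = 0 then a k else if I k = 1 then b k else 1

/-- `I ∼_ℓ J` for multi-indices in `{0,1,2}^d`: `J - I = e^(ℓ)`. -/
def Adj3 {d : ℕ} (I J : Fin d → Fin 3) (ℓ : Fin d) : Prop :=
  ((J ℓ : ℕ) = (I ℓ : ℕ) + 1) ∧ ∀ k, k ≠ ℓ → I k = J k

/-- The extended domain `D^ext = Π {a_i,1} ∪ ⋃ L_i`, where
`L_i = { x ∈ [0,1]^d : x_i = 0 }`. -/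
def Dext2 {d : ℕ} (a : Fin d → ℝ) (x : Fin d → ℝ) : Prop :=
  (∃ I : Fin d → Bool, x = xI2 a I) ∨ (InCube x ∧ ∃ i, x i = 0)

/-- The extended domain `D^ext = Π {a_i,b_i,1} ∪ ⋃ L_i`. -/
def Dext3 {d : ℕ} (a b : Fin d → ℝ) (x : Fin d → ℝ) : Prop :=
  (∃ I : Fin d → Fin 3, x = xI3 a b I) ∨ (InCube x ∧ ∃ i, x i = 0)

/-- Feasibility for the linear programs (3.1)/(3.4) on the `2^d` grid. -/
def Feasible2 {d : ℕ} (a b : Fin d → ℝ) (q : (Fin d → Bool) → ℝ) : Prop :=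
  (∀ i, 0 ≤ a i ∧ a i < b i ∧ b i ≤ 1) ∧
  (∀ (ℓ : Fin d) (I J : Fin d → Bool), Adj2 I J ℓ →
      0 ≤ q J - q I ∧ q J - q I ≤ b ℓ - a ℓ) ∧
  (∀ I, max 0 (Gd (vertex a b I)) ≤ q I ∧ q I ≤ Hd (vertex a b I))

/-- The objective `V(q) = Σ_{I ∈ {0,1}^d} (-1)^(d-‖I‖₁) q_I`. -/
def Vq {d : ℕ} (q : (Fin d → Bool) → ℝ) : ℝ :=
  ∑ I : Fin d → Bool, (-1 : ℝ) ^ (d - normOne I) * q I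

/-- Feasibility for the linear program (3.3) on the `3^d` grid. -/
def Feasible3 {d : ℕ} (a b : Fin d → ℝ) (q : (Fin d → Fin 3) → ℝ) : Prop :=
  (∀ i, 0 ≤ a i ∧ a i < b i ∧ b i ≤ 1) ∧
  (∀ (ℓ : Fin d) (I J : Fin d → Fin 3), Adj3 I J ℓ → J ℓ = 1 →
      0 ≤ q J - q I ∧ q J - q I ≤ b ℓ - a ℓ) ∧
  (∀ (ℓ : Fin d) (I J : Fin d → Fin 3), Adj3 I J ℓ → J ℓ = 2 →
      0 ≤ q J - q I ∧ q J - q I ≤ 1 - b ℓ) ∧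
  (∀ I, max 0 (Gd (xI3 a b I)) ≤ q I ∧ q I ≤ Hd (xI3 a b I))

/-- The objective `V(q)` for the `3^d` grid: the sum runs over multi-indices
with entries in `{0,1}` only. -/
def Vq3 {d : ℕ} (q : (Fin d → Fin 3) → ℝ) : ℝ :=
  ∑ I : Fin d → Bool, (-1 : ℝ) ^ (d - normOne I) * q (fun k => if I k then 1 else 0)

/-- A point of a box all of whose coordinates are endpoints. -/
def IsVertexPoint {d : ℕ} (a b : Fin d → ℝ) (u : Fin d → ℝ) : Prop :=
  ∀ i, u i = a i ∨ u i = b i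

/-- A point lies in the box `Π [a_i, b_i]`. -/
def InBox {d : ℕ} (a b : Fin d → ℝ) (u : Fin d → ℝ) : Prop :=
  ∀ i, u i ∈ Set.Icc (a i) (b i)

/-- `F` is multilinear on the box `Π [a_i, b_i]`: affine separately in each
variable (on the box). -/
def MultilinearOnBox {d : ℕ} (a b : Fin d → ℝ) (F : (Fin d → ℝ) → ℝ) : Prop :=
  ∀ (i : Fin d) (u : Fin d → ℝ), InBox a b u →
    ∃ c e : ℝ, ∀ t ∈ Set.Icc (a i) (b i), F (Function.update u i t) = c * t + e

/-! ### The vertex values -/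

/-- Three times the value prescribed at a vertex of `{2/3, 1}^{4k}` with `j` coordinates
equal to `1`. -/
def level (k j : ℕ) : ℕ :=
  if j = 4 * k then 3
  else if 2 * k + 1 ≤ j ∧ j ≤ 4 * k - 1 then 2
  else if j = 2 * k - 1 ∨ j = 2 * k then 1
  else 0

/-- Truncated subtraction makes this say both that `level` is nondecreasing on `[0, 4k]` and that
it increases by at most one at each step. -/
lemma level_le_add {k : ℕ} (hk : 2 ≤ k) {i j : ℕ} (hj : j ≤ 4 * k) :
    level k i ≤ level k j + (i - j) := by
  unfold level
  split_ifs <;> omega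

/-- The vertex `x_I` of the box `[2/3, 1]^d`. -/
noncomputable abbrev vtx {d : ℕ} (I : Fin d → Bool) : Fin d → ℝ :=
  vertex (fun _ => (2:ℝ)/3) (fun _ => (1:ℝ)) I

lemma normOne_le {d : ℕ} (I : Fin d → Bool) : normOne I ≤ d := by
  unfold normOne
  exact (Finset.card_le_univ _).trans (by simp)

lemma sum_vtx {d : ℕ} (I : Fin d → Bool) :
    ∑ l, vtx I l = 2 / 3 * d + normOne I / 3 := by
  have h : ∀ l, vtx I l = 2 / 3 + (if I l = true then (1:ℝ) else 0) / 3 := by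
    intro l
    unfold vtx vertex
    split_ifs <;> norm_num
  simp only [h, Finset.sum_add_distrib, ← Finset.sum_div, Finset.sum_boole, normOne]
  simp
  ring

lemma level_div_le_vtx {k : ℕ} (I : Fin (4 * k) → Bool) (l : Fin (4 * k)) :
    (level k (normOne I) : ℝ) / 3 ≤ vtx I l := by
  have hlow : (2:ℝ) / 3 ≤ vtx I l := by
    unfold vtx vertex
    split_ifs <;> norm_num
  by_cases h : normOne I = 4 * k
  · have hall : I l = true := by
      have hu : (Finset.univ.filter fun k => I k = true) = Finset.univ := by
        rw [← Finset.card_eq_iff_eq_univ]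
        simpa [normOne] using h
      have : l ∈ Finset.univ.filter fun k => I k = true := by rw [hu]; simp
      simpa using this
    simp [level, h, vertex, hall]
  · have h2 : level k (normOne I) ≤ 2 := by
      unfold level
      split_ifs <;> omega
    have h2' : (level k (normOne I) : ℝ) ≤ 2 := by exact_mod_cast h2
    linarith

/-! ### The quasi-copula -/

/-- The contribution `(m(‖I‖₁)/3 - Σ_l (x_I,l - u_l)⁺)⁺` of the vertex `x_I`: the smallest
nonnegative, nondecreasing function, 1-Lipschitz for the `ℓ¹` distance, that is at least
`m(‖I‖₁)/3` at `x_I`. -/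
noncomputable def cone (k : ℕ) (I : Fin (4 * k) → Bool) (u : Fin (4 * k) → ℝ) : ℝ :=
  max 0 ((level k (normOne I) : ℝ) / 3 - ∑ l, max (vtx I l - u l) 0)

/-- The quasi-copula: the maximum of the contributions of all vertices of `[2/3, 1]^{4k}`. -/
noncomputable def quasi (k : ℕ) (u : Fin (4 * k) → ℝ) : ℝ := ⨆ I, cone k I u

lemma cone_le_quasi {k : ℕ} (I : Fin (4 * k) → Bool) (u : Fin (4 * k) → ℝ) :
    cone k I u ≤ quasi k u :=
  le_ciSup (f := fun I => cone k I u) (Set.finite_range _).bddAbove I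

lemma quasi_nonneg {k : ℕ} (u : Fin (4 * k) → ℝ) : 0 ≤ quasi k u :=
  (le_max_left _ _).trans (cone_le_quasi (fun _ => true) u)

lemma quasi_le {k : ℕ} {u : Fin (4 * k) → ℝ} (hu : InCube u) (l : Fin (4 * k)) :
    quasi k u ≤ u l := by
  refine ciSup_le fun I => max_le (hu l).1 ?_
  have h1 : max (vtx I l - u l) 0 ≤ ∑ l, max (vtx I l - u l) 0 :=
    Finset.single_le_sum (f := fun l => max (vtx I l - u l) 0)
      (fun _ _ => le_max_right _ _) (Finset.mem_univ l)
  have h2 := le_max_left (vtx I l - u l) 0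
  have h3 := level_div_le_vtx I l
  linarith

lemma quasi_mono {k : ℕ} {u v : Fin (4 * k) → ℝ} (h : ∀ l, u l ≤ v l) :
    quasi k u ≤ quasi k v := by
  refine ciSup_le fun I => le_trans ?_ (cone_le_quasi I v)
  unfold cone
  gcongr
  exact h _

lemma quasi_le_add {k : ℕ} (u v : Fin (4 * k) → ℝ) :
    quasi k u ≤ quasi k v + ∑ l, |u l - v l| := by
  refine ciSup_le fun I => ?_
  have h0 : 0 ≤ ∑ l, |u l - v l| := Finset.sum_nonneg fun _ _ => abs_nonneg _
  have h1 := cone_le_quasi I v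
  have h2 : ∑ l, max (vtx I l - v l) 0 ≤ ∑ l, max (vtx I l - u l) 0 + ∑ l, |u l - v l| := by
    rw [← Finset.sum_add_distrib]
    refine Finset.sum_le_sum fun l _ => max_le ?_ ?_
    · linarith [le_max_left (vtx I l - u l) 0, le_abs_self (u l - v l)]
    · linarith [le_max_right (vtx I l - u l) 0, abs_nonneg (u l - v l)]
  refine max_le (by linarith [quasi_nonneg v]) ?_
  have h3 : _ ≤ cone k I v := le_max_right _ _
  linarith

lemma le_quasi {k : ℕ} {u : Fin (4 * k) → ℝ} (hu : InCube u) :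
    1 - ∑ l, (1 - u l) ≤ quasi k u := by
  have hn : normOne (fun _ : Fin (4 * k) => true) = 4 * k := by simp [normOne]
  have h := (le_max_right _ _).trans (cone_le_quasi (fun _ => true) u)
  rw [hn] at h
  have h2 : ∀ l, max (vtx (fun _ => true) l - u l) 0 = 1 - u l := fun l => by
    have := (hu l).2
    simp [vertex, this]
  simp only [h2] at h
  norm_num [level] at h ⊢
  linarith

lemma quasi_isQuasiCopula (k : ℕ) (hk : 2 ≤ k) : IsQuasiCopula (4 * k) (quasi k) where
  mem u hu := ⟨quasi_nonneg u, (quasi_le hu ⟨0, by omega⟩).trans (hu _).2⟩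
  bc0 u hu := fun ⟨i, hi⟩ => le_antisymm (hi ▸ quasi_le hu i) (quasi_nonneg u)
  bc1 i t ht := by
    have hu : InCube (fun j => if j = i then t else 1) := by
      intro j
      dsimp only
      split_ifs
      · exact ht
      · norm_num
    refine le_antisymm (by simpa using quasi_le hu i) ?_
    have h := le_quasi hu
    have hs : ∑ l, (1 - (if l = i then t else 1)) = 1 - t := by
      rw [Finset.sum_eq_single i]
      · simp
      · intro b _ hb
        simp [hb]
      · simp
    rw [hs] at h
    linarith
  mono i u v _ _ hne hle := quasi_mono fun l => by
    by_cases h : l = i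
    · exact h ▸ hle
    · exact (hne l h).le
  lip u v _ _ := by
    have h1 := quasi_le_add u v
    have h2 := quasi_le_add v u
    simp only [abs_sub_comm (v _) (u _)] at h2
    rw [abs_le]
    constructor <;> linarith

lemma quasi_vertex {k : ℕ} (hk : 2 ≤ k) (J : Fin (4 * k) → Bool) :
    quasi k (vtx J) = (level k (normOne J) : ℝ) / 3 := by
  apply le_antisymm
  · refine ciSup_le fun I => max_le (by positivity) ?_
    have h0 : 0 ≤ ∑ l, max (vtx I l - vtx J l) 0 :=
      Finset.sum_nonneg fun _ _ => le_max_right _ _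
    have h1 : ∑ l, (vtx I l - vtx J l) ≤ ∑ l, max (vtx I l - vtx J l) 0 :=
      Finset.sum_le_sum fun _ _ => le_max_left _ _
    rw [Finset.sum_sub_distrib, sum_vtx, sum_vtx] at h1
    have h2 : (level k (normOne I) : ℝ) ≤ level k (normOne J) + (normOne I - normOne J : ℕ) := by
      exact_mod_cast level_le_add hk (normOne_le J)
    rcases le_total (normOne I) (normOne J) with h | h
    · rw [Nat.sub_eq_zero_of_le h] at h2
      push_cast at h2
      linarith
    · rw [Nat.cast_sub h] at h2
      linarith
  · refine le_trans ?_ (cone_le_quasi J _)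
    simp [cone]

/-! ### The volume -/

lemma sum_normOne (d : ℕ) (f : ℕ → ℝ) :
    ∑ I : Fin d → Bool, f (normOne I) = ∑ j ∈ Finset.range (d + 1), (d.choose j : ℝ) * f j := by
  have h := Finset.sum_powerset_apply_card f (x := (Finset.univ : Finset (Fin d)))
  simp only [Finset.card_univ, Fintype.card_fin, nsmul_eq_mul] at h
  rw [← h, Finset.powerset_univ]
  refine Finset.sum_bij' (fun I _ => Finset.univ.filter fun k => I k = true)
    (fun s _ k => decide (k ∈ s)) ?_ ?_ ?_ ?_ ?_ <;> simp [normOne]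

/-- Partial alternating sums of a row of Pascal's triangle, as a sum over the whole row with a
cut-off. -/
lemma sum_cutoff {n m : ℕ} (hm : m ≤ n) :
    ∑ j ∈ Finset.range (n + 1 + 1),
      ((n + 1).choose j : ℝ) * ((-1) ^ j * if j < m + 1 then 1 else 0) = (-1) ^ m * n.choose m := by
  have h := @Int.alternating_sum_range_choose_eq_choose n m
  have h' : ∑ j ∈ Finset.range (m + 1), ((-1:ℝ) ^ j * (n + 1).choose j)
      = (-1) ^ m * n.choose m := by exact_mod_cast h
  rw [← h']
  symm
  have hsub : Finset.range (m + 1) ⊆ Finset.range (n + 1 + 1) :=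
    Finset.range_subset_range.2 (by omega)
  rw [← Finset.sum_subset hsub]
  · refine Finset.sum_congr rfl fun j hj => ?_
    rw [if_pos (Finset.mem_range.1 hj)]
    ring
  · intro j _ hj
    rw [if_neg (by simpa using hj)]
    ring

lemma level_eq {k j : ℕ} (hk : 2 ≤ k) (hj : j ≤ 4 * k) :
    (level k j : ℝ) = 3 - (if j < 2 * k - 2 + 1 then 1 else 0) - (if j < 2 * k + 1 then 1 else 0)
      - (if j < 4 * k - 1 + 1 then 1 else 0) := by
  unfold level
  split_ifs <;> first | omega | norm_num

lemma volume_sum {k : ℕ} (hk : 2 ≤ k) :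
    ∑ j ∈ Finset.range (4 * k + 1),
      ((4 * k).choose j : ℝ) * ((-1) ^ (4 * k - j) * ((level k j : ℝ) / 3)) =
        (1/3) * (1 - (Nat.choose (4 * k) (2 * k - 1) : ℝ)) := by
  obtain ⟨n, hn⟩ : ∃ n, 4 * k = n + 1 := ⟨4 * k - 1, by omega⟩
  -- `d = 4k` is even, so `(-1)^(d-j) = (-1)^j`.
  have hsplit : ∀ j ∈ Finset.range (4 * k + 1),
      ((4 * k).choose j : ℝ) * ((-1) ^ (4 * k - j) * ((level k j : ℝ) / 3)) =
      (-1) ^ j * (4 * k).choose j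
        - ((4 * k).choose j : ℝ) * ((-1) ^ j * if j < 2 * k - 2 + 1 then 1 else 0) / 3
        - ((4 * k).choose j : ℝ) * ((-1) ^ j * if j < 2 * k + 1 then 1 else 0) / 3
        - ((4 * k).choose j : ℝ) * ((-1) ^ j * if j < 4 * k - 1 + 1 then 1 else 0) / 3 := by
    intro j hj
    have hj' : j ≤ 4 * k := by simpa [Nat.lt_succ_iff] using hj
    have hs : (-1 : ℝ) ^ (4 * k - j) = (-1) ^ j := by
      apply neg_one_pow_congr
      rw [Nat.even_sub hj']
      have : Even (4 * k) := ⟨2 * k, by omega⟩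
      simp [this]
    rw [level_eq hk hj', hs]
    ring
  have h0 : ∑ j ∈ Finset.range (4 * k + 1), ((-1:ℝ) ^ j * (4 * k).choose j) = 0 := by
    exact_mod_cast Int.alternating_sum_range_choose_of_ne (n := 4 * k) (by omega)
  rw [Finset.sum_congr rfl hsplit]
  simp only [Finset.sum_sub_distrib, ← Finset.sum_div]
  rw [h0, hn, sum_cutoff (show 2 * k - 2 ≤ n by omega), sum_cutoff (show 2 * k ≤ n by omega),
    show n + 1 - 1 = n by omega, sum_cutoff le_rfl]
  have e1 : Even (2 * k - 2) := ⟨k - 1, by omega⟩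
  have e2 : Even (2 * k) := ⟨k, by omega⟩
  have e3 : Odd n := ⟨2 * k - 1, by omega⟩
  have hsym : n.choose (2 * k) = n.choose (2 * k - 1) :=
    Nat.choose_symm_of_eq_add (by omega)
  have hp : (n + 1).choose (2 * k - 1) = n.choose (2 * k - 2) + n.choose (2 * k - 1) := by
    rw [show 2 * k - 1 = (2 * k - 2) + 1 by omega, Nat.choose_succ_succ]
  rw [e1.neg_one_pow, e2.neg_one_pow, e3.neg_one_pow, hsym, hp, Nat.choose_self]
  push_cast
  ring

/-- for `d = 4k`, `k ≥ 2`, a `d`-quasi-copula whose volume on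
`[2/3, 1]^d` equals `(1/3)(1 - C(d, d/2 - 1))`. -/
theorem exists_quasiCopula_dim4k_volume
    (k : ℕ) (hk : 2 ≤ k) :
    ∃ Q : (Fin (4 * k) → ℝ) → ℝ, IsQuasiCopula (4 * k) Q ∧
      (∀ I : Fin (4 * k) → Bool,
        Q (vertex (fun _ => (2:ℝ)/3) (fun _ => (1:ℝ)) I) =
          if normOne I = 4 * k then 1
          else if 2 * k + 1 ≤ normOne I ∧ normOne I ≤ 4 * k - 1 then 2/3
          else if normOne I = 2 * k - 1 ∨ normOne I = 2 * k then 1/3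
          else 0) ∧
      boxVolume Q (fun _ => (2:ℝ)/3) (fun _ => 1) =
        (1/3) * (1 - (Nat.choose (4 * k) (2 * k - 1) : ℝ)) := by
  refine ⟨quasi k, quasi_isQuasiCopula k hk, fun I => ?_, ?_⟩
  · rw [quasi_vertex hk, level]
    split_ifs <;> norm_num
  · rw [← volume_sum hk, ← sum_normOne (4 * k)
      (fun j => (-1) ^ (4 * k - j) * ((level k j : ℝ) / 3))]
    unfold boxVolume
    exact Finset.sum_congr rfl fun I _ => by rw [quasi_vertex hk]

end QC
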